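/- (Main abstract fibre-homogenisation theorem, per fibre.) Assume Hypothesis (H). Then for every ε ∈ (0, 1/(2 C_R ‖M‖)), both B_ε := M + ε⁻¹ A and π_N M π_N + ε⁻¹ A (each with domain dom(A)) are boundedly invertible, and ‖ B_ε⁻¹ − (π_N M π_N + ε⁻¹ A)⁻¹ ‖ ≤ κ ε, where κ = 2 C_R (1 + ‖M‖/c)² + C_R. -/

import Mathlib

/-!
Write `P` and `Q = 1 - P` for the orthogonal projections onto `N` and `Nᗮ`, and absorb `ε⁻¹` into
`A`. A skew-selfadjoint perturbation does not change real parts, so `M + A` inherits from `M` the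
lower bound `c`; its range is closed, and has trivial orthogonal complement because a vector
orthogonal to it lies in the domain of `A† = -A`. This gives the inverse `B`. Replacing `M` by the
coercive operator `P M P + c Q` gives an inverse `S`, and since `A` is reduced by `N`, the operator
`P M P + A` has inverse `S P + J`, where `J` inverts `A` on `Nᗮ` and vanishes on `N`. As
`Q B = J (1 - M B)`, the second resolvent identity becomes
`B - (S P + J) = -(S P M J (1 - M B) + J M B)`, and every term contains a factor `J`, which is of
order `ε`.
-/

open scoped ComplexConjugate

section BoundedInverse

variable {𝕜 E F : Type*} [RCLike 𝕜] [NormedAddCommGroup E] [NormedSpace 𝕜 E]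
  [NormedAddCommGroup F] [NormedSpace 𝕜 F]

/-- `S` is an everywhere defined bounded inverse of the partially defined operator `T`. -/
structure IsBoundedInverse (T : E →ₗ.[𝕜] F) (S : F →L[𝕜] E) : Prop where
  left_inv : ∀ x : T.domain, S (T x) = x
  surjective : ∀ y : F, ∃ x : T.domain, T x = y

theorem IsBoundedInverse.sub_eq {A : E →ₗ.[𝕜] F} {M₁ M₂ : E →L[𝕜] F} {S₁ S₂ : F →L[𝕜] E}
    (h₁ : IsBoundedInverse (M₁.toLinearMap +ᵥ A) S₁)
    (h₂ : IsBoundedInverse (M₂.toLinearMap +ᵥ A) S₂) :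
    S₁ - S₂ = S₂ ∘L (M₂ - M₁) ∘L S₁ := by
  ext y
  obtain ⟨x, rfl⟩ := h₁.surjective y
  have hx : S₂ (M₂ x + A x) = x := h₂.left_inv x
  calc S₁ ((M₁.toLinearMap +ᵥ A) x) - S₂ (M₁ x + A x)
      = x - S₂ (M₁ x + A x) := by rw [h₁.left_inv]
    _ = S₂ (M₂ x - M₁ x) := by
      nth_rewrite 1 [← hx]
      rw [← map_sub, add_sub_add_right_eq_sub]
    _ = S₂ ((M₂ - M₁) (S₁ ((M₁.toLinearMap +ᵥ A) x))) := by rw [h₁.left_inv]; rfl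

theorem exists_isBoundedInverse {T : E →ₗ.[𝕜] F} {c : ℝ} (hc : 0 < c)
    (hT : ∀ x : T.domain, c * ‖(x : E)‖ ≤ ‖T x‖) (hsurj : Function.Surjective T) :
    ∃ S : F →L[𝕜] E, IsBoundedInverse T S ∧ ‖S‖ ≤ c⁻¹ := by
  have hinj : Function.Injective T.toFun := by
    refine (injective_iff_map_eq_zero T.toFun).2 fun x hx => ?_
    have hx' : c * ‖(x : E)‖ ≤ 0 := by
      rw [← norm_zero (E := F), ← hx]
      exact hT x
    exact Subtype.ext (norm_le_zero_iff.1 (nonpos_of_mul_nonpos_right hx' hc))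
  let e : T.domain ≃ₗ[𝕜] F := LinearEquiv.ofBijective T.toFun ⟨hinj, hsurj⟩
  have he (y : F) : ‖(e.symm y : E)‖ ≤ c⁻¹ * ‖y‖ := by
    have hTe : T (e.symm y) = y := e.apply_symm_apply y
    rw [le_inv_mul_iff₀ hc]
    simpa only [hTe] using hT (e.symm y)
  refine ⟨(T.domain.subtype ∘ₗ e.symm.toLinearMap).mkContinuous c⁻¹ he, ⟨fun x => ?_, hsurj⟩,
    LinearMap.mkContinuous_norm_le _ (inv_nonneg.2 hc.le) _⟩
  exact congrArg Subtype.val (e.symm_apply_apply x)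

theorem isClosed_vadd {A : E →ₗ.[𝕜] F} (hA : A.IsClosed) (M : E →L[𝕜] F) :
    (M.toLinearMap +ᵥ A).IsClosed := by
  have hgraph : ((M.toLinearMap +ᵥ A).graph : Set (E × F)) =
      (fun p : E × F => (p.1, p.2 - M p.1)) ⁻¹' (A.graph : Set (E × F)) := by
    ext ⟨a, b⟩
    simp only [Set.mem_preimage, SetLike.mem_coe, LinearPMap.mem_graph_iff]
    refine exists_congr fun x => and_congr_right ?_
    rintro rfl
    exact eq_sub_iff_add_eq'.symm
  change IsClosed ((M.toLinearMap +ᵥ A).graph : Set (E × F))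
  rw [hgraph]
  exact IsClosed.preimage (by fun_prop) hA

theorem isClosed_range_of_le_norm [CompleteSpace E] [CompleteSpace F] {T : E →ₗ.[𝕜] F}
    (hT : T.IsClosed) {c : ℝ} (hc : 0 < c) (hle : ∀ x : T.domain, c * ‖(x : E)‖ ≤ ‖T x‖) :
    IsClosed (T.toFun.range : Set F) := by
  have : CompleteSpace T.graph := IsClosed.completeSpace_coe (hs := hT)
  let φ : T.graph →L[𝕜] F := ContinuousLinearMap.snd 𝕜 E F ∘L T.graph.subtypeL
  have hφ (p : T.graph) : ‖p‖ ≤ (max c⁻¹ 1).toNNReal * ‖φ p‖ := by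
    obtain ⟨⟨a, b⟩, hp⟩ := p
    obtain ⟨x, rfl, rfl⟩ := (LinearPMap.mem_graph_iff T).1 hp
    rw [Real.coe_toNNReal _ (by positivity)]
    refine max_le ?_ (le_mul_of_one_le_left (norm_nonneg _) (le_max_right _ _))
    calc ‖(x : E)‖ ≤ c⁻¹ * ‖T x‖ := (le_inv_mul_iff₀ hc).2 (hle x)
      _ ≤ max c⁻¹ 1 * ‖T x‖ := by gcongr; exact le_max_left _ _
  have hrange : (T.toFun.range : Set F) = Set.range φ := by
    rw [← LinearPMap.graph_map_snd_eq_range]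
    ext y
    simp [φ]
  rw [hrange]
  exact (φ.antilipschitz_of_bound hφ).isClosed_range φ.uniformContinuous

end BoundedInverse

section SkewSelfAdjoint

variable {𝕜 H : Type*} [RCLike 𝕜] [NormedAddCommGroup H] [InnerProductSpace 𝕜 H] [CompleteSpace H]
  {A : H →ₗ.[𝕜] H} {M : H →L[𝕜] H} {c : ℝ}

theorem adjoint_smul_eq (hA : Dense (A.domain : Set H)) {a : 𝕜} (ha : a ≠ 0) :
    (a • A).adjoint = conj a • A.adjoint := by
  have hformal : (a • A).IsFormalAdjoint (conj a • A.adjoint) := fun x y => by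
    have h := (LinearPMap.adjoint_isFormalAdjoint hA).symm x y
    rw [LinearPMap.smul_apply, LinearPMap.smul_apply, inner_smul_left, inner_smul_right]
    exact congrArg (conj a * ·) h
  refine (LinearPMap.eq_of_le_of_domain_eq (hformal.le_adjoint (T := a • A) hA) ?_).symm
  ext y
  have hsmul : ⇑((innerₛₗ 𝕜 y).comp (a • A).toFun) = a • ⇑((innerₛₗ 𝕜 y).comp A.toFun) := by
    ext x
    exact inner_smul_right _ _ _
  rw [LinearPMap.smul_domain, LinearPMap.mem_adjoint_domain_iff,
    LinearPMap.mem_adjoint_domain_iff, hsmul]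
  exact (continuous_const_smul_iff₀ ha).symm

/-- Skew-selfadjointness `A† = -A` of a densely defined operator. Density is part of the definition
because `LinearPMap.adjoint` takes a junk value on operators that are not densely defined. -/
structure IsSkewSelfAdjoint (A : H →ₗ.[𝕜] H) : Prop where
  dense_domain : Dense (A.domain : Set H)
  adjoint_eq_neg : A.adjoint = -A

namespace IsSkewSelfAdjoint

theorem smul_ofReal (hA : IsSkewSelfAdjoint A) {r : ℝ} (hr : r ≠ 0) :
    IsSkewSelfAdjoint ((r : 𝕜) • A) where
  dense_domain := hA.dense_domain
  adjoint_eq_neg := by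
    rw [adjoint_smul_eq hA.dense_domain (RCLike.ofReal_ne_zero.2 hr), RCLike.conj_ofReal,
      hA.adjoint_eq_neg]
    exact LinearPMap.ext' (smul_neg _ _)

theorem isClosed (hA : IsSkewSelfAdjoint A) : A.IsClosed := by
  have hneg := hA.smul_ofReal (r := -1) (by norm_num)
  have hadj : (((-1 : ℝ) : 𝕜) • A).adjoint = A := by
    rw [hneg.adjoint_eq_neg]
    exact LinearPMap.ext' (by ext; simp)
  exact hadj ▸ LinearPMap.adjoint_isClosed hneg.dense_domain

theorem re_inner_self_eq_zero (hA : IsSkewSelfAdjoint A) (x : A.domain) :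
    RCLike.re (inner 𝕜 (A x) (x : H)) = 0 := by
  have hformal := LinearPMap.adjoint_isFormalAdjoint hA.dense_domain
  rw [hA.adjoint_eq_neg] at hformal
  have hskew : -inner 𝕜 (A x) (x : H) = inner 𝕜 (x : H) (A x) := by
    rw [← inner_neg_left]
    exact hformal x x
  have hre := congrArg RCLike.re hskew
  rw [map_neg, inner_re_symm (x : H)] at hre
  linarith

theorem re_inner_vadd_self (hA : IsSkewSelfAdjoint A) (M : H →L[𝕜] H) (x : A.domain) :
    RCLike.re (inner 𝕜 ((M.toLinearMap +ᵥ A) x) (x : H)) = RCLike.re (inner 𝕜 (M x) (x : H)) := by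
  rw [LinearPMap.vadd_apply, inner_add_left, map_add, hA.re_inner_self_eq_zero, add_zero]
  rfl

theorem mul_norm_le_norm_vadd (hA : IsSkewSelfAdjoint A)
    (hM : ∀ x : H, c * ‖x‖ ^ 2 ≤ RCLike.re (inner 𝕜 (M x) x)) (x : A.domain) :
    c * ‖(x : H)‖ ≤ ‖(M.toLinearMap +ᵥ A) x‖ := by
  rcases (norm_nonneg (x : H)).eq_or_lt with hx | hx
  · rw [← hx, mul_zero]
    exact norm_nonneg _
  · refine le_of_mul_le_mul_right ?_ hx
    calc c * ‖(x : H)‖ * ‖(x : H)‖ = c * ‖(x : H)‖ ^ 2 := by ring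
      _ ≤ RCLike.re (inner 𝕜 (M x) (x : H)) := hM x
      _ = RCLike.re (inner 𝕜 ((M.toLinearMap +ᵥ A) x) (x : H)) := (hA.re_inner_vadd_self M x).symm
      _ ≤ ‖(M.toLinearMap +ᵥ A) x‖ * ‖(x : H)‖ := re_inner_le_norm _ _

theorem mem_domain_of_inner_vadd_eq_zero (hA : IsSkewSelfAdjoint A) {w : H}
    (hw : ∀ x : A.domain, inner 𝕜 w ((M.toLinearMap +ᵥ A) x) = 0) : w ∈ A.domain := by
  have hadj : w ∈ A.adjoint.domain := by
    refine LinearPMap.mem_adjoint_domain_of_exists w ⟨-M.adjoint w, fun x => ?_⟩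
    rw [inner_neg_left, ContinuousLinearMap.adjoint_inner_left, neg_eq_iff_add_eq_zero,
      ← inner_add_right]
    exact hw x
  rwa [hA.adjoint_eq_neg] at hadj

theorem vadd_surjective (hA : IsSkewSelfAdjoint A) (hc : 0 < c)
    (hM : ∀ x : H, c * ‖x‖ ^ 2 ≤ RCLike.re (inner 𝕜 (M x) x)) :
    Function.Surjective (M.toLinearMap +ᵥ A) := by
  let K : Submodule 𝕜 H := (M.toLinearMap +ᵥ A).toFun.range
  have hK : IsClosed (K : Set H) :=
    isClosed_range_of_le_norm (isClosed_vadd hA.isClosed M) hc (hA.mul_norm_le_norm_vadd hM)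
  have : CompleteSpace K := hK.completeSpace_coe
  suffices hbot : Kᗮ = ⊥ from
    LinearMap.range_eq_top.1 ((Submodule.orthogonal_eq_bot_iff (K := K)).1 hbot)
  refine (Submodule.eq_bot_iff _).2 fun w hw => ?_
  have hwK (x : A.domain) : inner 𝕜 w ((M.toLinearMap +ᵥ A) x) = 0 :=
    Submodule.inner_left_of_mem_orthogonal (LinearMap.mem_range_self _ x) hw
  have hwA : w ∈ A.domain := hA.mem_domain_of_inner_vadd_eq_zero hwK
  have hre : RCLike.re (inner 𝕜 (M w) w) = 0 := by
    rw [← hA.re_inner_vadd_self M ⟨w, hwA⟩, inner_re_symm, hwK, map_zero]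
  have hnorm : ‖w‖ ^ 2 ≤ 0 := nonpos_of_mul_nonpos_right ((hM w).trans_eq hre) hc
  simpa using hnorm.antisymm (sq_nonneg _)

theorem exists_isBoundedInverse_vadd (hA : IsSkewSelfAdjoint A) (hc : 0 < c)
    (hM : ∀ x : H, c * ‖x‖ ^ 2 ≤ RCLike.re (inner 𝕜 (M x) x)) :
    ∃ S : H →L[𝕜] H, IsBoundedInverse (M.toLinearMap +ᵥ A) S ∧ ‖S‖ ≤ c⁻¹ :=
  exists_isBoundedInverse hc (hA.mul_norm_le_norm_vadd hM) (hA.vadd_surjective hc hM)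

end IsSkewSelfAdjoint

end SkewSelfAdjoint

section Reduction

variable {𝕜 H : Type*} [RCLike 𝕜] [NormedAddCommGroup H] [InnerProductSpace 𝕜 H]
  {A : H →ₗ.[𝕜] H} {K N : Submodule 𝕜 H} [K.HasOrthogonalProjection] [N.HasOrthogonalProjection]
  {J M S T : H →L[𝕜] H} {c : ℝ}

/-- `A` is reduced by `K`: the orthogonal projection `π` onto `K` satisfies `π A ⊆ A π`. -/
def IsReducedBy (A : H →ₗ.[𝕜] H) (K : Submodule 𝕜 H) [K.HasOrthogonalProjection] : Prop :=
  ∀ x : A.domain, ∃ hx : K.starProjection x ∈ A.domain,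
    K.starProjection (A x) = A ⟨K.starProjection x, hx⟩

/-- The compression `ι* A ι` of `A` to `K`, with domain `dom A ∩ K`, where `ι : K → H` is the
inclusion. -/
noncomputable def compression (A : H →ₗ.[𝕜] H) (K : Submodule 𝕜 H) [K.HasOrthogonalProjection] :
    K →ₗ.[𝕜] K where
  domain := A.domain.comap K.subtype
  toFun := K.orthogonalProjectionOnto.toLinearMap ∘ₗ A.toFun ∘ₗ K.subtype.restrict fun _ hx => hx

/-- `J` inverts the part of `A` in `K` and vanishes on `Kᗮ`, like a reduced resolvent. Vanishing on
`Kᗮ` is not a separate field: there `right_inv` makes `J y` a null vector of `A` lying in `K`. -/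
structure IsReducedInverse (A : H →ₗ.[𝕜] H) (K : Submodule 𝕜 H) [K.HasOrthogonalProjection]
    (J : H →L[𝕜] H) : Prop where
  left_inv : ∀ x : A.domain, J (A x) = K.starProjection x
  right_inv : ∀ y : H, ∃ x : A.domain, (x : H) = J y ∧ A x = K.starProjection y
  mem : ∀ y : H, J y ∈ K

theorem IsReducedBy.smul (hA : IsReducedBy A K) (a : 𝕜) : IsReducedBy (a • A) K := fun x => by
  obtain ⟨hx, hAx⟩ := hA x
  refine ⟨hx, ?_⟩
  rw [LinearPMap.smul_apply, map_smul]
  exact congrArg (a • ·) hAx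

theorem IsReducedBy.of_orthogonal (hA : IsReducedBy A Nᗮ) : IsReducedBy A N := fun x => by
  obtain ⟨hx, hAx⟩ := hA x
  have hproj (y : H) : N.starProjection y = y - Nᗮ.starProjection y :=
    eq_sub_of_add_eq (N.starProjection_add_starProjection_orthogonal y)
  have hdom : N.starProjection x ∈ A.domain := by
    rw [hproj]
    exact sub_mem x.2 hx
  refine ⟨hdom, ?_⟩
  rw [hproj, hAx, ← A.map_sub]
  exact congrArg A (Subtype.ext (hproj x).symm)

theorem IsReducedInverse.of_compression (hA : IsReducedBy A K) {J : K →L[𝕜] K}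
    (hJ : IsBoundedInverse (compression A K) J) :
    IsReducedInverse A K (K.subtypeL ∘L J ∘L K.orthogonalProjectionOnto) where
  left_inv x := by
    obtain ⟨hx, hAx⟩ := hA x
    have hJx := hJ.left_inv ⟨K.orthogonalProjectionOnto x, hx⟩
    have hcomp : compression A K ⟨K.orthogonalProjectionOnto x, hx⟩ =
        K.orthogonalProjectionOnto (A x) := by
      change K.orthogonalProjectionOnto (A ⟨K.starProjection x, hx⟩) = _
      rw [← hAx]
      exact K.orthogonalProjectionOnto_mem_subspace_eq_self _
    rw [hcomp] at hJx
    exact congrArg Subtype.val hJx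
  right_inv y := by
    obtain ⟨x, hx⟩ := hJ.surjective (K.orthogonalProjectionOnto y)
    obtain ⟨hxA, hAx⟩ := hA ⟨x.1, x.2⟩
    have hJy : J (K.orthogonalProjectionOnto y) = x := by rw [← hx, hJ.left_inv]
    have hxK : (⟨K.starProjection (x : K), hxA⟩ : A.domain) = ⟨x.1, x.2⟩ :=
      Subtype.ext (Submodule.starProjection_eq_self_iff.2 x.1.2)
    refine ⟨⟨x.1, x.2⟩, congrArg Subtype.val hJy.symm, ?_⟩
    rw [hxK] at hAx
    exact hAx.symm.trans (congrArg Subtype.val hx)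
  mem y := (J _).2

theorem IsReducedInverse.smul (hJ : IsReducedInverse A K J) {a : 𝕜} (ha : a ≠ 0) :
    IsReducedInverse (a • A) K (a⁻¹ • J) where
  left_inv x := by
    rw [← hJ.left_inv x, LinearPMap.smul_apply, smul_apply, map_smul]
    exact inv_smul_smul₀ ha _
  right_inv y := by
    obtain ⟨x, hx, hAx⟩ := hJ.right_inv y
    refine ⟨a⁻¹ • x, congrArg (a⁻¹ • ·) hx, ?_⟩
    rw [← hAx, ← smul_inv_smul₀ ha (A x), ← A.map_smul]
    rfl
  mem y := K.smul_mem _ (hJ.mem y)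

theorem IsReducedInverse.starProjection_mul (hJ : IsReducedInverse A K J) :
    K.starProjection * J = J := by
  ext y
  exact Submodule.starProjection_eq_self_iff.2 (hJ.mem y)

theorem IsReducedInverse.mul_starProjection (hJ : IsReducedInverse A K J) :
    J * K.starProjection = J := by
  ext y
  obtain ⟨x, hx, hAx⟩ := hJ.right_inv y
  calc J (K.starProjection y) = K.starProjection x := by rw [← hAx, hJ.left_inv]
    _ = J y := by rw [hx, Submodule.starProjection_eq_self_iff.2 (hJ.mem y)]

theorem IsReducedInverse.starProjection_mul_eq (hJ : IsReducedInverse A K J)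
    (hS : IsBoundedInverse (M.toLinearMap +ᵥ A) S) :
    K.starProjection * S = J * (1 - M * S) := by
  ext y
  obtain ⟨x, rfl⟩ := hS.surjective y
  have hAx : (M.toLinearMap +ᵥ A) x - M x = A x := add_sub_cancel_left _ _
  calc K.starProjection (S ((M.toLinearMap +ᵥ A) x)) = J (A x) := by rw [hS.left_inv, hJ.left_inv]
    _ = J ((M.toLinearMap +ᵥ A) x - M (S ((M.toLinearMap +ᵥ A) x))) := by rw [hS.left_inv, hAx]


theorem IsReducedInverse.mul_starProjection_orthogonal (hJ : IsReducedInverse A Nᗮ J) :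
    J * N.starProjection = 0 := by
  have hJQ : J * (1 - N.starProjection) = J := by
    simpa only [Submodule.starProjection_orthogonal'] using hJ.mul_starProjection
  rwa [mul_sub, mul_one, sub_eq_self] at hJQ

theorem IsReducedInverse.starProjection_orthogonal_mul (hJ : IsReducedInverse A Nᗮ J) :
    N.starProjection * J = 0 := by
  have hQJ : (1 - N.starProjection) * J = J := by
    simpa only [Submodule.starProjection_orthogonal'] using hJ.starProjection_mul
  rwa [sub_mul, one_mul, sub_eq_self] at hQJ

theorem IsReducedBy.isBoundedInverse_mul_starProjection_vadd (hA : IsReducedBy A N)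
    (hT : Commute T N.starProjection) (hS : IsBoundedInverse (T.toLinearMap +ᵥ A) S)
    (hJ : IsReducedInverse A Nᗮ J) :
    IsBoundedInverse ((T * N.starProjection).toLinearMap +ᵥ A) (S * N.starProjection + J) where
  left_inv x := by
    have hTN (y : H) : T (N.starProjection y) = N.starProjection (T y) := DFunLike.congr_fun hT.eq y
    obtain ⟨hx, hAx⟩ := hA x
    have hN : N.starProjection (T (N.starProjection x) + A x) =
        (T.toLinearMap +ᵥ A) ⟨N.starProjection x, hx⟩ := by
      rw [map_add, ← hTN, Submodule.starProjection_eq_self_iff.2 (N.starProjection_apply_mem x), hAx]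
      rfl
    have hJT : J (T (N.starProjection x)) = 0 := by
      rw [hTN]
      exact DFunLike.congr_fun hJ.mul_starProjection_orthogonal (T x)
    calc S (N.starProjection (T (N.starProjection x) + A x)) + J (T (N.starProjection x) + A x)
        = N.starProjection x + Nᗮ.starProjection x := by
          rw [hN, hS.left_inv, map_add, hJT, zero_add, hJ.left_inv]
      _ = x := N.starProjection_add_starProjection_orthogonal x
  surjective y := by
    obtain ⟨z, rfl⟩ := hS.surjective y
    obtain ⟨hz, hAz⟩ := hA z
    obtain ⟨x, hx, hAx⟩ := hJ.right_inv ((T.toLinearMap +ᵥ A) z)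
    have hNx : N.starProjection (x : H) = 0 := by
      rw [hx]
      exact DFunLike.congr_fun hJ.starProjection_orthogonal_mul _
    have hTz : T (N.starProjection (N.starProjection (z : H))) = N.starProjection (T (z : H)) := by
      rw [Submodule.starProjection_eq_self_iff.2 (N.starProjection_apply_mem z)]
      exact DFunLike.congr_fun hT.eq (z : H)
    refine ⟨⟨N.starProjection z, hz⟩ + x, ?_⟩
    calc T (N.starProjection (N.starProjection z + x)) + A (⟨N.starProjection z, hz⟩ + x)
        = N.starProjection (T z + A z) + Nᗮ.starProjection ((T.toLinearMap +ᵥ A) z) := by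
          rw [map_add, hNx, add_zero, hTz, A.map_add, ← hAz, hAx, map_add, add_assoc]
      _ = (T.toLinearMap +ᵥ A) z := N.starProjection_add_starProjection_orthogonal _

/-- The operator acting as the compression `ι* M ι` on `N` and as multiplication by `c` on `Nᗮ`; for
`c > 0` it is coercive as soon as the compression is. -/
noncomputable def extendCompression (M : H →L[𝕜] H) (N : Submodule 𝕜 H) [N.HasOrthogonalProjection]
    (c : ℝ) : H →L[𝕜] H :=
  N.starProjection * M * N.starProjection + (c : 𝕜) • Nᗮ.starProjection

theorem norm_sq_le_re_inner_extendCompression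
    (hM : ∀ x ∈ N, c * ‖x‖ ^ 2 ≤ RCLike.re (inner 𝕜 (M x) x)) (x : H) :
    c * ‖x‖ ^ 2 ≤ RCLike.re (inner 𝕜 (extendCompression M N c x) x) := by
  have hQ : RCLike.re (inner 𝕜 ((c : 𝕜) • Nᗮ.starProjection x) x) =
      c * ‖Nᗮ.starProjection x‖ ^ 2 := by
    rw [inner_smul_left, RCLike.conj_ofReal, RCLike.re_ofReal_mul,
      Submodule.re_inner_starProjection_eq_normSq]
    rfl
  calc c * ‖x‖ ^ 2 = c * ‖N.starProjection x‖ ^ 2 + c * ‖Nᗮ.starProjection x‖ ^ 2 := by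
        rw [Submodule.norm_sq_eq_add_norm_sq_starProjection x N, mul_add]
    _ ≤ RCLike.re (inner 𝕜 (M (N.starProjection x)) (N.starProjection x)) +
        RCLike.re (inner 𝕜 ((c : 𝕜) • Nᗮ.starProjection x) x) :=
      add_le_add (hM _ (N.starProjection_apply_mem x)) hQ.ge
    _ = RCLike.re (inner 𝕜 (extendCompression M N c x) x) := by
      rw [← Submodule.inner_starProjection_left_eq_right, ← map_add, ← inner_add_left]
      rfl

theorem extendCompression_mul_starProjection (M : H →L[𝕜] H) (c : ℝ) :
    extendCompression M N c * N.starProjection = N.starProjection * M * N.starProjection := by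
  rw [extendCompression, Submodule.starProjection_orthogonal', add_mul, smul_mul_assoc, mul_assoc,
    N.isIdempotentElem_starProjection.eq, N.isIdempotentElem_starProjection.one_sub_mul_self,
    smul_zero, add_zero]

theorem commute_extendCompression_starProjection (M : H →L[𝕜] H) (c : ℝ) :
    Commute (extendCompression M N c) N.starProjection := by
  have hmul : N.starProjection * extendCompression M N c =
      N.starProjection * M * N.starProjection := by
    rw [extendCompression, Submodule.starProjection_orthogonal', mul_add, mul_smul_comm,
      ← mul_assoc, ← mul_assoc, N.isIdempotentElem_starProjection.eq,
      N.isIdempotentElem_starProjection.mul_one_sub_self, smul_zero, add_zero]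
  exact (extendCompression_mul_starProjection M c).trans hmul.symm

theorem IsReducedInverse.sub_eq {B : H →L[𝕜] H} (hJ : IsReducedInverse A Nᗮ J)
    (hB : IsBoundedInverse (M.toLinearMap +ᵥ A) B)
    (hP : IsBoundedInverse ((N.starProjection * M * N.starProjection).toLinearMap +ᵥ A)
      (S * N.starProjection + J)) :
    B - (S * N.starProjection + J) =
      -(S * N.starProjection * M * (J * (1 - M * B)) + J * M * B) := by
  have hN : N.starProjection * N.starProjection = N.starProjection :=
    N.isIdempotentElem_starProjection.eq
  rw [← hJ.starProjection_mul_eq hB, Submodule.starProjection_orthogonal']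
  calc B - (S * N.starProjection + J)
      = (S * N.starProjection + J) * (N.starProjection * M * N.starProjection - M) * B :=
        hB.sub_eq hP
    _ = S * (N.starProjection * N.starProjection) * M * N.starProjection * B +
          J * N.starProjection * M * N.starProjection * B -
          S * N.starProjection * M * B - J * M * B := by noncomm_ring
    _ = -(S * N.starProjection * M * ((1 - N.starProjection) * B) + J * M * B) := by
      rw [hN, hJ.mul_starProjection_orthogonal]
      noncomm_ring

theorem IsReducedInverse.norm_inverse_sub_le {B : H →L[𝕜] H} (hJ : IsReducedInverse A Nᗮ J)
    (hB : IsBoundedInverse (M.toLinearMap +ᵥ A) B)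
    (hP : IsBoundedInverse ((N.starProjection * M * N.starProjection).toLinearMap +ᵥ A)
      (S * N.starProjection + J))
    {b : ℝ} (hBb : ‖B‖ ≤ b) (hSb : ‖S‖ ≤ b) :
    ‖B - (S * N.starProjection + J)‖ ≤ ‖J‖ * ((1 + ‖M‖ * b) ^ 2 - 1) := by
  have hb : 0 ≤ b := (norm_nonneg B).trans hBb
  have hMB : ‖M * B‖ ≤ ‖M‖ * b := (norm_mul_le _ _).trans (by gcongr)
  have hone : ‖1 - M * B‖ ≤ 1 + ‖M‖ * b :=
    (norm_sub_le _ _).trans (add_le_add ContinuousLinearMap.norm_id_le hMB)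
  have hSN : ‖S * N.starProjection‖ ≤ b * 1 :=
    (norm_mul_le _ _).trans (mul_le_mul hSb N.starProjection_norm_le (norm_nonneg _) hb)
  calc ‖B - (S * N.starProjection + J)‖
      ≤ ‖S * N.starProjection‖ * ‖M‖ * (‖J‖ * ‖1 - M * B‖) + ‖J‖ * ‖M * B‖ := by
        rw [hJ.sub_eq hB hP, norm_neg, mul_assoc J]
        refine (norm_add_le _ _).trans (add_le_add ?_ (norm_mul_le _ _))
        exact (norm_mul_le _ _).trans
          (mul_le_mul (norm_mul_le _ _) (norm_mul_le _ _) (norm_nonneg _) (by positivity))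
    _ ≤ b * 1 * ‖M‖ * (‖J‖ * (1 + ‖M‖ * b)) + ‖J‖ * (‖M‖ * b) := by gcongr
    _ = ‖J‖ * ((1 + ‖M‖ * b) ^ 2 - 1) := by ring

theorem IsSkewSelfAdjoint.exists_norm_sub_le [CompleteSpace H] (hA : IsSkewSelfAdjoint A)
    (hAN : IsReducedBy A N) (hJ : IsReducedInverse A Nᗮ J) (hc : 0 < c)
    (hM : ∀ x : H, c * ‖x‖ ^ 2 ≤ RCLike.re (inner 𝕜 (M x) x)) :
    ∃ B P : H →L[𝕜] H,
      IsBoundedInverse (M.toLinearMap +ᵥ A) B ∧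
      IsBoundedInverse ((N.starProjection * M * N.starProjection).toLinearMap +ᵥ A) P ∧
      ‖B - P‖ ≤ ‖J‖ * ((1 + ‖M‖ * c⁻¹) ^ 2 - 1) := by
  obtain ⟨B, hB, hBnorm⟩ := hA.exists_isBoundedInverse_vadd hc hM
  obtain ⟨S, hS, hSnorm⟩ := hA.exists_isBoundedInverse_vadd hc
    (norm_sq_le_re_inner_extendCompression (N := N) fun x _ => hM x)
  have hP := hAN.isBoundedInverse_mul_starProjection_vadd
    (commute_extendCompression_starProjection M c) hS hJ
  rw [extendCompression_mul_starProjection] at hP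
  exact ⟨B, _, hB, hP, hJ.norm_inverse_sub_le hB hP hBnorm hSnorm⟩

end Reduction

theorem statement8_general {𝕜 H : Type*} [RCLike 𝕜] [NormedAddCommGroup H] [InnerProductSpace 𝕜 H]
    [CompleteSpace H] {M : H →L[𝕜] H} {c : ℝ} (hc : 0 < c)
    (hM : ∀ x : H, c * ‖x‖ ^ 2 ≤ RCLike.re (inner 𝕜 (M x) x))
    {A : H →ₗ.[𝕜] H} (hA : IsSkewSelfAdjoint A) {N : Submodule 𝕜 H} [N.HasOrthogonalProjection]
    (hAN : IsReducedBy A Nᗮ) {J : Nᗮ →L[𝕜] Nᗮ} (hJ : IsBoundedInverse (compression A Nᗮ) J)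
    {ε : ℝ} (hε : 0 < ε) :
    ∃ B P : H →L[𝕜] H,
      IsBoundedInverse (M.toLinearMap +ᵥ ((ε⁻¹ : ℝ) : 𝕜) • A) B ∧
      IsBoundedInverse
        ((N.starProjection * M * N.starProjection).toLinearMap +ᵥ ((ε⁻¹ : ℝ) : 𝕜) • A) P ∧
      ‖B - P‖ ≤ ‖J‖ * ((1 + ‖M‖ / c) ^ 2 - 1) * ε := by
  have hε' : ε⁻¹ ≠ 0 := inv_ne_zero hε.ne'
  let J' : H →L[𝕜] H := Nᗮ.subtypeL ∘L J ∘L Nᗮ.orthogonalProjectionOnto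
  have hJ' : IsReducedInverse A Nᗮ J' := .of_compression hAN hJ
  have hJ'norm : ‖J'‖ ≤ ‖J‖ := by
    refine J'.opNorm_le_bound (norm_nonneg J) fun x => ?_
    exact J.le_opNorm_of_le (Nᗮ.norm_orthogonalProjectionOnto_apply_le x)
  have hnorm : ‖((ε⁻¹ : ℝ) : 𝕜)⁻¹ • J'‖ ≤ ‖J‖ * ε := by
    rw [norm_smul, norm_inv, RCLike.norm_ofReal, abs_inv, inv_inv, abs_of_pos hε, mul_comm]
    gcongr
  obtain ⟨B, P, hB, hP, hBP⟩ := (hA.smul_ofReal hε').exists_norm_sub_le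
    (hAN.of_orthogonal.smul _) (hJ'.smul (RCLike.ofReal_ne_zero.2 hε')) hc hM
  refine ⟨B, P, hB, hP, hBP.trans ?_⟩
  have hfactor : 0 ≤ (1 + ‖M‖ / c) ^ 2 - 1 := by
    rw [sub_nonneg]
    exact one_le_pow₀ (le_add_of_nonneg_right (by positivity))
  calc _ ≤ ‖J‖ * ε * ((1 + ‖M‖ / c) ^ 2 - 1) := by
        rw [← div_eq_mul_inv]
        gcongr
    _ = ‖J‖ * ((1 + ‖M‖ / c) ^ 2 - 1) * ε := by ring

/-- **Main abstract fibre-homogenisation theorem, per fibre.**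
Under Hypothesis (H), for every `ε ∈ (0, 1/(2 C_R ‖M‖))` both `B_ε = M + ε⁻¹ A` and
`π_N M π_N + ε⁻¹ A` (each with domain `dom A`) are boundedly invertible and
`‖B_ε⁻¹ − (π_N M π_N + ε⁻¹ A)⁻¹‖ ≤ κ ε` with `κ = 2 C_R (1 + ‖M‖/c)² + C_R`. -/
theorem statement8
    {H : Type*} [NormedAddCommGroup H] [InnerProductSpace ℂ H] [CompleteSpace H]
    -- `M` is a bounded operator with `Re⟪M x, x⟫ ≥ c ‖x‖²`, `c > 0`
    (M : H →L[ℂ] H) (c : ℝ) (hc : 0 < c)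
    (hM : ∀ x : H, c * ‖x‖ ^ 2 ≤ (inner ℂ (M x) x : ℂ).re)
    -- `A` is densely defined and skew-selfadjoint
    (A : H →ₗ.[ℂ] H) (hA_dense : Dense (A.domain : Set H)) (hA_skew : A.adjoint = -A)
    -- `N` is a closed subspace, `R = Nᗮ`
    (N : Submodule ℂ H) [CompleteSpace N]
    (C_R : ℝ) (hC_R : 0 < C_R)
    -- Hypothesis (H)(a): `N ⊆ dom A` and `A π_N` is bounded
    (hHa_sub : N ≤ A.domain)
    (hHa_bdd : ∃ Ca : ℝ, ∀ x : A.domain, (x : H) ∈ N → ‖A x‖ ≤ Ca * ‖(x : H)‖)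
    -- Hypothesis (H)(b): `π_R A ⊆ A π_R`
    (hHb : ∀ x : A.domain,
      ∃ hx : ((Submodule.orthogonalProjectionOnto Nᗮ (x : H) : H)) ∈ A.domain,
        (Submodule.orthogonalProjectionOnto Nᗮ (A x) : H)
          = A ⟨(Submodule.orthogonalProjectionOnto Nᗮ (x : H) : H), hx⟩)
    -- Hypothesis (H)(c): the compression `ι_R* A ι_R`, with domain `dom(A) ∩ R`, is a
    -- bijection onto `R` with bounded inverse of norm at most `C_R`
    (hHc : ∃ J : Nᗮ →L[ℂ] Nᗮ, ‖J‖ ≤ C_R ∧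
      (∀ (x : A.domain) (hx : (x : H) ∈ Nᗮ),
        J (Submodule.orthogonalProjectionOnto Nᗮ (A x)) = ⟨(x : H), hx⟩) ∧
      (∀ y : Nᗮ, ∃ (x : A.domain) (hx : (x : H) ∈ Nᗮ),
        Submodule.orthogonalProjectionOnto Nᗮ (A x) = y))
    (ε : ℝ) (hε : ε ∈ Set.Ioo (0 : ℝ) (1 / (2 * C_R * ‖M‖))) :
    ∃ (Binv Pinv : H →L[ℂ] H),
      -- `Binv` is the bounded inverse of `B_ε = M + ε⁻¹ A`
      (∀ x : A.domain, Binv (M (x : H) + ε⁻¹ • A x) = x) ∧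
      (∀ y : H, ∃ x : A.domain, M (x : H) + ε⁻¹ • A x = y) ∧
      -- `Pinv` is the bounded inverse of `π_N M π_N + ε⁻¹ A` (domain `dom A`)
      (∀ x : A.domain,
        Pinv ((Submodule.orthogonalProjectionOnto N (M ((Submodule.orthogonalProjectionOnto N (x : H) : H))) : H)
            + ε⁻¹ • A x) = x) ∧
      (∀ y : H, ∃ x : A.domain,
        (Submodule.orthogonalProjectionOnto N (M ((Submodule.orthogonalProjectionOnto N (x : H) : H))) : H)
            + ε⁻¹ • A x = y) ∧
      -- the estimate with `κ = 2 C_R (1 + ‖M‖/c)² + C_R`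
      ‖Binv - Pinv‖ ≤ (2 * C_R * (1 + ‖M‖ / c) ^ 2 + C_R) * ε := by
  obtain ⟨J, hJ, hJl, hJs⟩ := hHc
  obtain ⟨B, P, hB, hP, hBP⟩ := statement8_general hc hM ⟨hA_dense, hA_skew⟩ hHb (J := J)
    ⟨fun x => hJl ⟨x.1, x.2⟩ x.1.2, fun y => let ⟨x, hx, hy⟩ := hJs y; ⟨⟨⟨x, hx⟩, x.2⟩, hy⟩⟩ hε.1
  refine ⟨B, P, hB.left_inv, hB.surjective, hP.left_inv, hP.surjective,
    hBP.trans (mul_le_mul_of_nonneg_right ?_ hε.1.le)⟩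
  nlinarith [mul_le_mul_of_nonneg_right hJ (sq_nonneg (1 + ‖M‖ / c)), norm_nonneg J,
    mul_nonneg hC_R.le (sq_nonneg (1 + ‖M‖ / c))]
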